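/- arXiv:2602.01110 — 2 statements merged into one kernel-verified Lean document; each statement's English description precedes it below -/
import Mathlib

section
/- Let Γ be a thick generalised hexagon, and let x1, x2, x3 be a round-up triple of points of Γ such that x1 and x2 are collinear. Then x1, x2 and x3 are contained in a common line of Γ. -/
/-- An incidence structure of points and lines, each line being a set of points. -/
structure GenHexagon where
  Point : Type
  Line : Type
  pts : Line → Set Point

namespace GenHexagon

variable (Γ : GenHexagon)

/-- Adjacency of the bipartite incidence graph on the disjoint union of points and lines:
a point is adjacent to a line iff the point lies on the line. -/
def incAdj : Γ.Point ⊕ Γ.Line → Γ.Point ⊕ Γ.Line → Prop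
  | Sum.inl x, Sum.inr L => x ∈ Γ.pts L
  | Sum.inr L, Sum.inl x => x ∈ Γ.pts L
  | _, _ => False

/-- The bipartite incidence graph. -/
def incGraph : SimpleGraph (Γ.Point ⊕ Γ.Line) where
  Adj := Γ.incAdj
  symm := ⟨by rintro (x | L) (y | M) h <;> simp_all [incAdj]⟩
  loopless := ⟨by rintro (x | L) h <;> simp_all [incAdj]⟩

/-- `Γ` is a generalised hexagon: its incidence graph has diameter `6` and girth `12`. -/
def IsGenHexagon : Prop :=
  Γ.incGraph.ediam = 6 ∧ Γ.incGraph.egirth = 12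

/-- Two points are collinear if they are distinct and some line contains both. -/
def Collinear (x y : Γ.Point) : Prop :=
  x ≠ y ∧ ∃ L, x ∈ Γ.pts L ∧ y ∈ Γ.pts L

/-- Two points are special if they are distinct, non-collinear, and collinear
to a common point. -/
def Special (x y : Γ.Point) : Prop :=
  x ≠ y ∧ ¬ Γ.Collinear x y ∧ ∃ z, Γ.Collinear x z ∧ Γ.Collinear y z

/-- Two points are opposite if they are distinct, non-collinear and non-special. -/
def Opposite (x y : Γ.Point) : Prop :=
  x ≠ y ∧ ¬ Γ.Collinear x y ∧ ¬ Γ.Special x y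

/-- `Γ` has order `(s, t)`: every line contains exactly `s + 1` points and every
point lies on exactly `t + 1` lines. -/
def HasOrder (s t : ℕ) : Prop :=
  (∀ L, (Γ.pts L).encard = s + 1) ∧ (∀ x, {L | x ∈ Γ.pts L}.encard = t + 1)

/-- `Γ` is thick: every line contains at least `3` points and every point lies on
at least `3` lines. -/
def Thick : Prop :=
  (∀ L, 3 ≤ (Γ.pts L).encard) ∧ (∀ x, 3 ≤ {L | x ∈ Γ.pts L}.encard)

/-- A point is close to a line if it is collinear to exactly one point of that line. -/
def CloseTo (x : Γ.Point) (L : Γ.Line) : Prop :=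
  ∃! y, y ∈ Γ.pts L ∧ Γ.Collinear x y

/-- Two lines are opposite if they are disjoint and no point of one is collinear to
a point of the other. -/
def OppLines (L M : Γ.Line) : Prop :=
  (∀ x ∈ Γ.pts L, x ∉ Γ.pts M) ∧
  (∀ x ∈ Γ.pts L, ∀ y ∈ Γ.pts M, ¬ Γ.Collinear x y)

/-- The distance-3 trace `[L,M]₃` of two (opposite) lines: the set of points close to
both `L` and `M`. -/
def trace3 (L M : Γ.Line) : Set Γ.Point :=
  {x | Γ.CloseTo x L ∧ Γ.CloseTo x M}

/-- The distance-3 trace `[L,M]₃` is regular if `[N,M]₃ = [L,M]₃` for every line `N`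
opposite `M` such that `[N,M]₃` and `[L,M]₃` share at least two points. -/
def RegularTrace3 (L M : Γ.Line) : Prop :=
  ∀ N, Γ.OppLines N M → (Γ.trace3 N M ∩ Γ.trace3 L M).Nontrivial →
    Γ.trace3 N M = Γ.trace3 L M

/-- A hyperbolic line: a set `H` of pairwise special points, all collinear to a common
point `p`, such that for every point `q` opposite `p` to which at least two points of `H`
are special, the set of points special to `q` and collinear to `p` equals `H`. -/
def IsHyperbolicLine (H : Set Γ.Point) : Prop :=
  (∀ x ∈ H, ∀ y ∈ H, x ≠ y → Γ.Special x y) ∧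
  ∃ p, (∀ x ∈ H, Γ.Collinear x p) ∧
    ∀ q, Γ.Opposite q p → {x ∈ H | Γ.Special q x}.Nontrivial →
      {x | Γ.Special q x ∧ Γ.Collinear x p} = H

/-- A round-up triple: no point of `Γ` is opposite exactly one of `x₁, x₂, x₃`. -/
def RoundUpTriple (x₁ x₂ x₃ : Γ.Point) : Prop :=
  ∀ y : Γ.Point,
    ¬ ((Γ.Opposite y x₁ ∧ ¬ Γ.Opposite y x₂ ∧ ¬ Γ.Opposite y x₃) ∨
       (¬ Γ.Opposite y x₁ ∧ Γ.Opposite y x₂ ∧ ¬ Γ.Opposite y x₃) ∨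
       (¬ Γ.Opposite y x₁ ∧ ¬ Γ.Opposite y x₂ ∧ Γ.Opposite y x₃))

/-- A geometric line: a set `T` of points such that each point of `Γ` is either opposite
no member of `T`, or non-opposite to exactly one member of `T`. -/
def IsGeometricLine (T : Set Γ.Point) : Prop :=
  ∀ y : Γ.Point, (∀ x ∈ T, ¬ Γ.Opposite y x) ∨ (∃! x, x ∈ T ∧ ¬ Γ.Opposite y x)

end GenHexagon

/-!
Suppose that `x₃` is off the line `L` through `x₁` and `x₂`. It suffices to find a point `y` that is
within incidence distance `3` of `L`, hence opposite no point of `L`, but is opposite `x₃`. If `x₃`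
is collinear to a point `p` of `L`, extend the path from `x₃` through `p` and `L` by a point `q` of
`L`, a second line through `q` and a point `y` of it. Otherwise take any `a` on `L`: either `a` is
already opposite `x₃`, or the path of length `4` from `x₃` to `a` extends along `L` to another
point `y` of `L`. Either way `x₃` and `y` are the ends of a path of length `6`, and such points
are opposite because a shorter connection would close up to a cycle of length at most `10`.
-/

section Girth

variable {V : Type*} {G : SimpleGraph V} {u v w : V}

theorem eq_of_isPath_of_length_add_lt_egirth {p q : G.Walk u v} (hp : p.IsPath) (hq : q.IsPath)
    (h : (p.length + q.length : ℕ∞) < G.egirth) : p = q := by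
  by_contra hne
  obtain ⟨_, -, -, c, hc, hlen⟩ := hp.exists_isCycle_length_le_add_of_ne hq hne
  exact (h.trans_le (SimpleGraph.egirth_le_length hc)).not_ge (mod_cast hlen)

theorem length_le_of_isPath_of_length_add_lt_egirth {p : G.Walk u v} (hp : p.IsPath)
    (q : G.Walk u v) (h : (p.length + q.length : ℕ∞) < G.egirth) : p.length ≤ q.length := by
  classical
  have hle : q.bypass.length ≤ q.length := q.length_bypass_le_length
  have heq : p = q.bypass :=
    eq_of_isPath_of_length_add_lt_egirth hp q.bypass_isPath (lt_of_le_of_lt (by gcongr) h)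
  rwa [heq]

theorem isPath_cons_of_length_lt_egirth (huv : G.Adj u v) {p : G.Walk v w} (hp : p.IsPath)
    (hu : u ≠ p.snd) (h : (p.length + 1 : ℕ∞) < G.egirth) : (p.cons huv).IsPath := by
  classical
  refine hp.cons fun hmem => ?_
  have hedge : s(v, u) ∉ (p.takeUntil u hmem).edges := fun he =>
    hu (hp.eq_snd_of_mem_edges (p.edges_takeUntil_subset_edges hmem he))
  have hcycle : ((p.takeUntil u hmem).cons huv).IsCycle :=
    (SimpleGraph.Walk.cons_isCycle_iff _ _).2 ⟨hp.takeUntil hmem, by rwa [Sym2.eq_swap]⟩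
  have hle : ((p.takeUntil u hmem).cons huv).length ≤ p.length + 1 :=
    Nat.succ_le_succ (p.length_takeUntil_le_length hmem)
  exact (h.trans_le (SimpleGraph.egirth_le_length hcycle)).not_ge (mod_cast hle)

end Girth

namespace GenHexagon

variable {Γ : GenHexagon} {x y z p q : Γ.Point} {L M N : Γ.Line}

theorem incGraph_adj_inl_inr (h : x ∈ Γ.pts L) : Γ.incGraph.Adj (Sum.inl x) (Sum.inr L) := h

theorem incGraph_adj_inr_inl (h : x ∈ Γ.pts L) : Γ.incGraph.Adj (Sum.inr L) (Sum.inl x) := h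

theorem Thick.nontrivial_pts (h : Γ.Thick) (L : Γ.Line) : (Γ.pts L).Nontrivial :=
  Set.one_lt_encard_iff_nontrivial.1 (lt_of_lt_of_le (by norm_num) (h.1 L))

theorem Thick.nontrivial_lines (h : Γ.Thick) (x : Γ.Point) : {L | x ∈ Γ.pts L}.Nontrivial :=
  Set.one_lt_encard_iff_nontrivial.1 (lt_of_lt_of_le (by norm_num) (h.2 x))

theorem IsGenHexagon.ten_lt_egirth (h : Γ.IsGenHexagon) : 10 < Γ.incGraph.egirth := by
  rw [h.2]
  norm_num

theorem special_of_not_opposite (hne : x ≠ y) (hcol : ¬ Γ.Collinear x y)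
    (h : ¬ Γ.Opposite x y) : Γ.Special x y := by
  by_contra hspec
  exact h ⟨hne, hcol, hspec⟩

theorem not_opposite_of_mem (hyN : y ∈ Γ.pts N) (hqN : q ∈ Γ.pts N) (hqL : q ∈ Γ.pts L)
    (hzL : z ∈ Γ.pts L) : ¬ Γ.Opposite y z := by
  rintro ⟨hne, hcol, hspec⟩
  have hyq : y ≠ q := by
    rintro rfl
    exact hcol ⟨hne, L, hqL, hzL⟩
  have hzq : z ≠ q := by
    rintro rfl
    exact hcol ⟨hne, N, hyN, hqN⟩
  exact hspec ⟨hne, hcol, q, ⟨hyq, N, hyN, hqN⟩, ⟨hzq, L, hzL, hqL⟩⟩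

theorem opposite_of_forall_four_lt_length
    (h : ∀ w : Γ.incGraph.Walk (Sum.inl x) (Sum.inl y), 4 < w.length) : Γ.Opposite x y := by
  refine ⟨?_, ?_, ?_⟩
  · rintro rfl
    simpa using h .nil
  · rintro ⟨-, M, hxM, hyM⟩
    simpa using h (.cons (incGraph_adj_inl_inr hxM) (.cons (incGraph_adj_inr_inl hyM) .nil))
  · rintro ⟨-, -, z, ⟨-, M, hxM, hzM⟩, ⟨-, N, hyN, hzN⟩⟩
    simpa using h (.cons (incGraph_adj_inl_inr hxM) (.cons (incGraph_adj_inr_inl hzM)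
      (.cons (incGraph_adj_inl_inr hzN) (.cons (incGraph_adj_inr_inl hyN) .nil))))

theorem opposite_of_isPath_of_length_eq_six (hg : 10 < Γ.incGraph.egirth)
    {w : Γ.incGraph.Walk (Sum.inl x) (Sum.inl y)} (hw : w.IsPath) (hlen : w.length = 6) :
    Γ.Opposite x y := by
  refine opposite_of_forall_four_lt_length fun v => ?_
  by_contra! hv
  have hsum : (w.length + v.length : ℕ∞) < Γ.incGraph.egirth :=
    lt_of_le_of_lt (mod_cast (by omega : w.length + v.length ≤ 10)) hg
  have hle : w.length ≤ v.length := length_le_of_isPath_of_length_add_lt_egirth hw v hsum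
  omega

theorem opposite_of_chain (hg : 10 < Γ.incGraph.egirth)
    (hxM : x ∈ Γ.pts M) (hpM : p ∈ Γ.pts M) (hpL : p ∈ Γ.pts L) (hqL : q ∈ Γ.pts L)
    (hqN : q ∈ Γ.pts N) (hyN : y ∈ Γ.pts N)
    (hxp : x ≠ p) (hML : M ≠ L) (hpq : p ≠ q) (hLN : L ≠ N) (hqy : q ≠ y) : Γ.Opposite x y := by
  have hshort {n : ℕ} (hn : n ≤ 10) : (n : ℕ∞) < Γ.incGraph.egirth :=
    lt_of_le_of_lt (mod_cast hn) hg
  have hNy : (SimpleGraph.Walk.nil.cons (incGraph_adj_inr_inl hyN)).IsPath := by simp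
  have hqNy := isPath_cons_of_length_lt_egirth (incGraph_adj_inl_inr hqN) hNy
    (by simpa using hqy) (hshort (n := 2) (by norm_num))
  have hLqNy := isPath_cons_of_length_lt_egirth (incGraph_adj_inr_inl hqL) hqNy
    (by simpa using hLN) (hshort (n := 3) (by norm_num))
  have hpLqNy := isPath_cons_of_length_lt_egirth (incGraph_adj_inl_inr hpL) hLqNy
    (by simpa using hpq) (hshort (n := 4) (by norm_num))
  have hMpLqNy := isPath_cons_of_length_lt_egirth (incGraph_adj_inr_inl hpM) hpLqNy
    (by simpa using hML) (hshort (n := 5) (by norm_num))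
  have hxMpLqNy := isPath_cons_of_length_lt_egirth (incGraph_adj_inl_inr hxM) hMpLqNy
    (by simpa using hxp) (hshort (n := 6) (by norm_num))
  exact opposite_of_isPath_of_length_eq_six hg hxMpLqNy rfl

theorem exists_opposite_of_collinear_mem (hg : 10 < Γ.incGraph.egirth)
    (hline : ∀ L, (Γ.pts L).Nontrivial) (hpoint : ∀ x, {L | x ∈ Γ.pts L}.Nontrivial)
    (hx : x ∉ Γ.pts L) (hp : p ∈ Γ.pts L) (hpx : Γ.Collinear p x) :
    ∃ y, Γ.Opposite y x ∧ ∀ z ∈ Γ.pts L, ¬ Γ.Opposite y z := by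
  obtain ⟨hpx, M, hpM, hxM⟩ := hpx
  obtain ⟨q, hq, hqp⟩ := (hline L).exists_ne p
  obtain ⟨N, hqN, hNL⟩ := (hpoint q).exists_ne L
  obtain ⟨y, hyN, hyq⟩ := (hline N).exists_ne q
  have hLM : L ≠ M := by
    rintro rfl
    exact hx hxM
  exact ⟨y, opposite_of_chain hg hyN hqN hq hp hpM hxM hyq hNL hqp hLM hpx,
    fun _ => not_opposite_of_mem hyN hqN hq⟩

theorem exists_mem_opposite_of_forall_not_collinear (hg : 10 < Γ.incGraph.egirth)
    (hL : (Γ.pts L).Nontrivial) (hx : x ∉ Γ.pts L) (hfar : ∀ p ∈ Γ.pts L, ¬ Γ.Collinear p x) :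
    ∃ y ∈ Γ.pts L, Γ.Opposite y x := by
  obtain ⟨a, ha, b, hb, hab⟩ := hL
  by_cases hax : Γ.Opposite a x
  · exact ⟨a, ha, hax⟩
  have hspec : Γ.Special a x :=
    special_of_not_opposite (ne_of_mem_of_not_mem ha hx) (hfar a ha) hax
  obtain ⟨hne, hcol, z, ⟨haz, M, haM, hzM⟩, ⟨hxz, N, hxN, hzN⟩⟩ := hspec
  have hLM : L ≠ M := by
    rintro rfl
    exact hfar z hzM ⟨hxz.symm, N, hzN, hxN⟩
  have hMN : M ≠ N := by
    rintro rfl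
    exact hcol ⟨hne, M, haM, hxN⟩
  exact ⟨b, hb, opposite_of_chain hg hb ha haM hzM hzN hxN hab.symm hLM haz hMN hxz.symm⟩

theorem exists_opposite_of_notMem (hg : 10 < Γ.incGraph.egirth)
    (hline : ∀ L, (Γ.pts L).Nontrivial) (hpoint : ∀ x, {L | x ∈ Γ.pts L}.Nontrivial)
    (hx : x ∉ Γ.pts L) : ∃ y, Γ.Opposite y x ∧ ∀ z ∈ Γ.pts L, ¬ Γ.Opposite y z := by
  by_cases! hfar : ∀ p ∈ Γ.pts L, ¬ Γ.Collinear p x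
  · obtain ⟨y, hyL, hyx⟩ := exists_mem_opposite_of_forall_not_collinear hg (hline L) hx hfar
    exact ⟨y, hyx, fun _ => not_opposite_of_mem hyL hyL hyL⟩
  · obtain ⟨p, hp, hpx⟩ := hfar
    exact exists_opposite_of_collinear_mem hg hline hpoint hx hp hpx

end GenHexagon

theorem roundUpTriple_collinear_general (Γ : GenHexagon) (hg : 10 < Γ.incGraph.egirth)
    (hline : ∀ L, (Γ.pts L).Nontrivial) (hpoint : ∀ x, {L | x ∈ Γ.pts L}.Nontrivial)
    (x₁ x₂ x₃ : Γ.Point)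
    (h : ∀ y, Γ.Opposite y x₃ → Γ.Opposite y x₁ ∨ Γ.Opposite y x₂)
    (L : Γ.Line) (h₁ : x₁ ∈ Γ.pts L) (h₂ : x₂ ∈ Γ.pts L) : x₃ ∈ Γ.pts L := by
  by_contra h₃
  obtain ⟨y, hy, hyL⟩ := GenHexagon.exists_opposite_of_notMem hg hline hpoint h₃
  exact (h y hy).elim (hyL x₁ h₁) (hyL x₂ h₂)

/-- A round-up triple of points of a thick generalised hexagon with `x₁` and `x₂`
collinear is contained in a common line. -/
theorem roundUpTriple_collinear (Γ : GenHexagon) (hΓ : Γ.IsGenHexagon) (hth : Γ.Thick)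
    (x₁ x₂ x₃ : Γ.Point) (hrut : Γ.RoundUpTriple x₁ x₂ x₃)
    (hcol : Γ.Collinear x₁ x₂) :
    ∃ L, x₁ ∈ Γ.pts L ∧ x₂ ∈ Γ.pts L ∧ x₃ ∈ Γ.pts L := by
  obtain ⟨-, L, h₁, h₂⟩ := hcol
  refine ⟨L, h₁, h₂, roundUpTriple_collinear_general Γ hΓ.ten_lt_egirth
    hth.nontrivial_pts hth.nontrivial_lines x₁ x₂ x₃ (fun y hy => ?_) L h₁ h₂⟩
  by_contra! hno
  exact hrut y (.inr (.inr ⟨hno.1, hno.2, hy⟩))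
end

section
/- Let Γ be a thick generalised hexagon and let T be a geometric line of Γ containing at least two points. Then T is either the point set of a line of Γ, or a hyperbolic line of Γ, or a regular distance-3 trace of Γ. -/
/-!
Paths of total length less than the girth with the same ends coincide, so in the incidence graph
geodesics between non-opposite elements are unique, and every geodesic extends to one of length `6`.

Let `T` be a geometric line. If a ball around an element `c` contains two points of `T` but misses
some `t ∈ T`, extend a geodesic from `t` to `c` beyond `c` to length `6`: its end is a point
opposite `t`, but not opposite the two points, a contradiction. Hence `T` is contained in the ball.
If all points of `T` are at the same distance less than `6` from `c`, then every neighbour `a` of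
`c` is on a geodesic from `c` to some point of `T`: otherwise a path leaving `c` through `a` leads
to a point opposite all of `T`. These two facts show that `T` equals every distance-`i` trace
`[v,w]_i` which it meets in two points. Two opposite points of `T` lie in a distance-3 trace, two
special points in a distance-2 trace, and two collinear points on a line, where the same two facts
apply directly.
-/

section Girth

variable {V : Type*} {G H : SimpleGraph V}

theorem isAcyclic_of_encard_edgeSet_lt_egirth (hle : H ≤ G) (hlt : H.edgeSet.encard < G.egirth) :
    H.IsAcyclic := by
  classical
  intro v c hc
  have hcard : (c.length : ℕ∞) ≤ H.edgeSet.encard := by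
    rw [← c.length_edges, ← List.toFinset_card_of_nodup hc.edges_nodup,
      ← Set.encard_coe_eq_coe_finsetCard]
    exact Set.encard_le_encard fun e he => c.edges_subset_edgeSet (List.mem_toFinset.1 he)
  exact (((SimpleGraph.egirth_anti hle).trans (SimpleGraph.egirth_le_length hc)).trans
    hcard).not_gt hlt

theorem path_eq_of_length_add_lt_egirth {v w : V} {p q : G.Walk v w} (hp : p.IsPath)
    (hq : q.IsPath) (hlt : ((p.length + q.length : ℕ) : ℕ∞) < G.egirth) : p = q := by
  classical
  let E : Finset (Sym2 V) := p.edges.toFinset ∪ q.edges.toFinset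
  have hEG : (E : Set (Sym2 V)) ⊆ G.edgeSet := by
    intro e he
    rcases Finset.mem_union.1 he with h | h
    · exact p.edges_subset_edgeSet (List.mem_toFinset.1 h)
    · exact q.edges_subset_edgeSet (List.mem_toFinset.1 h)
  let H := SimpleGraph.fromEdgeSet (E : Set (Sym2 V))
  have hHE : H.edgeSet = E := by
    rw [SimpleGraph.edgeSet_fromEdgeSet, sdiff_eq_left, Set.disjoint_left]
    exact fun e he => G.not_isDiag_of_mem_edgeSet (hEG he)
  have hHG : H ≤ G := SimpleGraph.edgeSet_subset_edgeSet.1 (hHE ▸ hEG)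
  have hcard : H.edgeSet.encard ≤ (p.length + q.length : ℕ) := by
    rw [hHE, Set.encard_coe_eq_coe_finsetCard, ← p.length_edges, ← q.length_edges]
    exact_mod_cast (Finset.card_union_le _ _).trans
      (add_le_add p.edges.toFinset_card_le q.edges.toFinset_card_le)
  have hpH : ∀ e ∈ p.edges, e ∈ H.edgeSet := fun e he => by simp [hHE, E, he]
  have hqH : ∀ e ∈ q.edges, e ∈ H.edgeSet := fun e he => by simp [hHE, E, he]
  have htransfer : p.transfer H hpH = q.transfer H hqH := congrArg Subtype.val
    (((isAcyclic_of_encard_edgeSet_lt_egirth hHG (hcard.trans_lt hlt)).subsingleton_path v w).elim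
      ⟨_, hp.transfer hpH⟩ ⟨_, hq.transfer hqH⟩)
  exact SimpleGraph.Walk.ext_support (by
    simpa only [SimpleGraph.Walk.support_transfer] using
      congrArg SimpleGraph.Walk.support htransfer)

end Girth

/-- A graph of diameter `n` and girth `2n`, such as the incidence graph of a generalised
`n`-gon. -/
structure IsGenPolygon {V : Type*} (G : SimpleGraph V) (n : ℕ) : Prop where
  ediam_eq : G.ediam = n
  egirth_eq : G.egirth = (2 * n : ℕ)

namespace IsGenPolygon

variable {V : Type*} {G : SimpleGraph V} {n : ℕ} {u v w a b c : V}

theorem two_le (h : IsGenPolygon G n) : 2 ≤ n := by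
  have h3 : 3 ≤ G.egirth := SimpleGraph.three_le_egirth
  rw [h.egirth_eq] at h3
  have : 3 ≤ 2 * n := by exact_mod_cast h3
  omega

theorem not_isAcyclic (h : IsGenPolygon G n) : ¬ G.IsAcyclic := by
  rw [← SimpleGraph.egirth_eq_top, h.egirth_eq]
  exact ENat.natCast_ne_top _

theorem connected (h : IsGenPolygon G n) : G.Connected := by
  have : Nonempty V := by
    by_contra hV
    exact h.not_isAcyclic fun v => (hV ⟨v⟩).elim
  exact SimpleGraph.connected_of_ediam_ne_top (h.ediam_eq ▸ ENat.natCast_ne_top n)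

theorem dist_triangle (h : IsGenPolygon G n) (u v w : V) :
    G.dist u w ≤ G.dist u v + G.dist v w :=
  h.connected.dist_triangle

theorem dist_le (h : IsGenPolygon G n) (u v : V) : G.dist u v ≤ n := by
  have hle : G.edist u v ≤ G.ediam := SimpleGraph.edist_le_ediam
  rw [h.ediam_eq, ← (h.connected u v).coe_dist_eq_edist] at hle
  exact_mod_cast hle

theorem exists_dist_eq_of_le (h : IsGenPolygon G n) {k : ℕ} (hk : k ≤ G.dist v w) :
    ∃ m, G.dist v m = k ∧ k + G.dist m w = G.dist v w := by
  obtain ⟨p, hp⟩ := h.connected.exists_walk_length_eq_dist v w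
  have htake : G.dist v (p.getVert k) ≤ k :=
    (SimpleGraph.dist_le (p.take k)).trans (by rw [p.take_length]; omega)
  have hdrop : G.dist (p.getVert k) w ≤ G.dist v w - k :=
    (SimpleGraph.dist_le (p.drop k)).trans (by rw [p.drop_length, hp])
  have htri := h.dist_triangle v (p.getVert k) w
  exact ⟨p.getVert k, by omega, by omega⟩

theorem exists_adj_dist_eq_add_one (h : IsGenPolygon G n) (hvw : v ≠ w) :
    ∃ a, G.Adj v a ∧ G.dist v w = G.dist a w + 1 := by
  obtain ⟨a, hva, haw⟩ := h.exists_dist_eq_of_le (h.connected.pos_dist_of_ne hvw)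
  exact ⟨a, SimpleGraph.dist_eq_one_iff_adj.1 hva, by omega⟩

theorem eq_of_dist_add_dist_eq (h : IsGenPolygon G n) (hvw : G.dist v w < n)
    (ha : G.dist v a + G.dist a w = G.dist v w) (hb : G.dist v b + G.dist b w = G.dist v w)
    (hab : G.dist v a = G.dist v b) : a = b := by
  have through : ∀ m, G.dist v m + G.dist m w = G.dist v w →
      ∃ p : G.Walk v w, p.length = G.dist v w ∧ p.getVert (G.dist v m) = m := by
    intro m hm
    obtain ⟨p, hp⟩ := h.connected.exists_walk_length_eq_dist v m
    obtain ⟨q, hq⟩ := h.connected.exists_walk_length_eq_dist m w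
    exact ⟨p.append q, by rw [SimpleGraph.Walk.length_append, hp, hq, hm],
      by simp [SimpleGraph.Walk.getVert_append, hp]⟩
  obtain ⟨p, hp, hpa⟩ := through a ha
  obtain ⟨q, hq, hqb⟩ := through b hb
  have hpq : p = q := path_eq_of_length_add_lt_egirth (p.isPath_of_length_eq_dist hp)
    (q.isPath_of_length_eq_dist hq) (by rw [h.egirth_eq]; exact_mod_cast (by omega))
  rw [← hpa, ← hqb, hpq, hab]

theorem dist_eq_add_one_of_ne (h : IsGenPolygon G n) (ha : G.Adj v a) (hb : G.Adj v b)
    (hab : a ≠ b) (haw : G.dist v w = G.dist a w + 1) (hvw : G.dist v w < n) :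
    G.dist b w = G.dist v w + 1 := by
  classical
  have htri := h.dist_triangle b v w
  rw [SimpleGraph.dist_eq_one_iff_adj.2 hb.symm] at htri
  by_contra hne
  obtain ⟨p, hp⟩ := h.connected.exists_walk_length_eq_dist a w
  obtain ⟨q, hq⟩ := h.connected.exists_walk_length_eq_dist b w
  have hvq : v ∉ q.support := fun hv => by
    have hlt := SimpleGraph.Walk.length_dropUntil_lt_length hv hb.ne
    have hle := SimpleGraph.dist_le (q.dropUntil v hv)
    omega
  have hpath : (p.cons ha).IsPath := SimpleGraph.Walk.isPath_of_length_eq_dist _ (by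
    rw [SimpleGraph.Walk.length_cons, hp, haw])
  have heq : p.cons ha = q.cons hb := path_eq_of_length_add_lt_egirth hpath
    ((q.isPath_of_length_eq_dist hq).cons hvq) (by
      rw [h.egirth_eq, SimpleGraph.Walk.length_cons, SimpleGraph.Walk.length_cons]
      exact_mod_cast (by omega))
  exact hab (by simpa using congrArg SimpleGraph.Walk.snd heq)

theorem dist_adj_eq (h : IsGenPolygon G n) (ha : G.Adj v a) (hvw : G.dist v w < n) :
    G.dist v w = G.dist a w + 1 ∨ G.dist a w = G.dist v w + 1 := by
  by_cases hne : v = w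
  · subst hne
    exact Or.inr (by rw [SimpleGraph.dist_self, SimpleGraph.dist_eq_one_iff_adj.2 ha.symm])
  obtain ⟨b, hb, hbw⟩ := h.exists_adj_dist_eq_add_one hne
  by_cases hba : b = a
  · exact Or.inl (hba ▸ hbw)
  · exact Or.inr (h.dist_eq_add_one_of_ne hb ha hba hbw hvw)

/-- Geodesics from `c` to `u` and to `t` that leave `c` along different edges join up to a
geodesic, as long as the diameter allows it. -/
theorem dist_eq_add_of_adj (h : IsGenPolygon G n) {t : V} (ha : G.Adj c a)
    (hu : G.dist c u = G.dist a u + 1) (ht : G.dist a t = G.dist c t + 1)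
    (hn : G.dist c u + G.dist c t ≤ n) : G.dist u t = G.dist c u + G.dist c t := by
  induction hk : G.dist c t generalizing c a with
  | zero => rw [← (h.connected c t).dist_eq_zero_iff.1 hk, SimpleGraph.dist_comm, add_zero]
  | succ k ih =>
    have hct : c ≠ t := by rintro rfl; rw [SimpleGraph.dist_self] at hk; omega
    obtain ⟨b, hb, hbt⟩ := h.exists_adj_dist_eq_add_one hct
    have hab : a ≠ b := by rintro rfl; omega
    have hbu := h.dist_eq_add_one_of_ne ha hb hab hu (by omega)
    have := ih hb.symm hbu hbt (by omega) (by omega)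
    omega

-- A vertex of a cycle farthest from `v` is at distance at least `n`: otherwise at most one of
-- its two neighbours on the cycle is closer to `v`, and the other one is farther.
theorem exists_dist_eq (h : IsGenPolygon G n) (v : V) : ∃ w, G.dist v w = n := by
  obtain ⟨x, c, hc⟩ : ∃ x, ∃ c : G.Walk x x, c.IsCycle := by
    simpa [SimpleGraph.IsAcyclic] using h.not_isAcyclic
  obtain ⟨w, hw, hmax⟩ := Set.exists_max_image {y | y ∈ c.support} (G.dist · v)
    c.support.finite_toSet ⟨x, c.start_mem_support⟩
  refine ⟨w, (h.dist_le v w).eq_of_not_lt fun hlt => ?_⟩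
  classical
  rw [SimpleGraph.dist_comm] at hlt
  have hcw := hc.rotate hw
  have closer : ∀ y ∈ (c.rotate w hw).support, G.Adj w y → G.dist w v = G.dist y v + 1 :=
    fun y hy hwy => (h.dist_adj_eq hwy hlt).resolve_right fun hfar => by
      have := hmax y ((c.mem_support_rotate_iff w hw).1 hy)
      omega
  have hsnd := (c.rotate w hw).adj_snd hcw.not_nil
  have hpen := ((c.rotate w hw).adj_penultimate hcw.not_nil).symm
  have hfar := h.dist_eq_add_one_of_ne hsnd hpen hcw.snd_ne_penultimate
    (closer _ ((c.rotate w hw).getVert_mem_support _) hsnd) hlt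
  have hcloser : G.dist w v = G.dist (c.rotate w hw).penultimate v + 1 :=
    closer _ ((c.rotate w hw).getVert_mem_support _) hpen
  omega

theorem exists_adj_ne (h : IsGenPolygon G n) (v a : V) : ∃ b, G.Adj v b ∧ b ≠ a := by
  have h2 := h.two_le
  by_contra! honly
  obtain ⟨x, hx⟩ := h.exists_dist_eq v
  obtain ⟨b, hvb, -⟩ := h.exists_adj_dist_eq_add_one (v := v) (w := x) (by
    rintro rfl; rw [SimpleGraph.dist_self] at hx; omega)
  obtain rfl := honly b hvb
  obtain ⟨y, hy⟩ := h.exists_dist_eq b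
  obtain ⟨b', hvb', hb'y⟩ := h.exists_adj_dist_eq_add_one (v := v) (w := y) (by
    rintro rfl; rw [SimpleGraph.dist_eq_one_iff_adj.2 hvb.symm] at hy; omega)
  obtain rfl := honly b' hvb'
  have := h.dist_le v y
  omega

theorem exists_dist_eq_add (h : IsGenPolygon G n) {k : ℕ} (hk : k + G.dist v w ≤ n) :
    ∃ u, G.dist v u = k ∧ G.dist u w = k + G.dist v w := by
  induction k with
  | zero => exact ⟨v, by simp⟩
  | succ k ih =>
    obtain ⟨u, hvu, huw⟩ := ih (by omega)
    obtain ⟨b, hub, hbw⟩ : ∃ b, G.Adj u b ∧ G.dist b w = G.dist u w + 1 := by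
      by_cases hne : u = w
      · obtain ⟨b, hb, -⟩ := h.exists_adj_ne u u
        subst hne
        exact ⟨b, hb, by rw [SimpleGraph.dist_self, SimpleGraph.dist_eq_one_iff_adj.2 hb.symm]⟩
      · obtain ⟨a, ha, haw⟩ := h.exists_adj_dist_eq_add_one hne
        obtain ⟨b, hb, hba⟩ := h.exists_adj_ne u a
        exact ⟨b, hb, h.dist_eq_add_one_of_ne ha hb hba.symm haw (by omega)⟩
    have hub1 := SimpleGraph.dist_eq_one_iff_adj.2 hub
    have h1 := h.dist_triangle v u b
    have h2 := h.dist_triangle b v w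
    rw [SimpleGraph.dist_comm (u := b) (v := v)] at h2
    exact ⟨b, by omega, by omega⟩

end IsGenPolygon

namespace GenHexagon

variable {Γ : GenHexagon}

theorem IsGenHexagon.isGenPolygon (hΓ : Γ.IsGenHexagon) : IsGenPolygon Γ.incGraph 6 :=
  ⟨hΓ.1, hΓ.2⟩

/-- The colouring of the incidence graph by type: `true` on points, `false` on lines. -/
def typeColoring (Γ : GenHexagon) : Γ.incGraph.Coloring Bool :=
  SimpleGraph.Coloring.mk Sum.isLeft (by
    rintro (x | L) (y | M) h
    · exact h.elim
    · simp only [Sum.isLeft_inl, Sum.isLeft_inr, ne_eq, Bool.true_eq_false, not_false_eq_true]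
    · simp only [Sum.isLeft_inl, Sum.isLeft_inr, ne_eq, Bool.false_eq_true, not_false_eq_true]
    · exact h.elim)

/-- The distance-`i` trace `[v,w]_i` of two opposite elements: the points at distance `i` from
`v` and `6 - i` from `w`, written without subtraction. -/
def distTrace (i : ℕ) (v w : Γ.Point ⊕ Γ.Line) : Set Γ.Point :=
  {z | Γ.incGraph.dist v (.inl z) = i ∧ i + Γ.incGraph.dist (.inl z) w = 6}

theorem dist_inl_inr_eq_one_iff {x : Γ.Point} {L : Γ.Line} :
    Γ.incGraph.dist (.inl x) (.inr L) = 1 ↔ x ∈ Γ.pts L :=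
  SimpleGraph.dist_eq_one_iff_adj

theorem dist_inr_inl_eq_one_iff {x : Γ.Point} {L : Γ.Line} :
    Γ.incGraph.dist (.inr L) (.inl x) = 1 ↔ x ∈ Γ.pts L :=
  SimpleGraph.dist_eq_one_iff_adj

theorem exists_inl_of_adj {L : Γ.Line} {v : Γ.Point ⊕ Γ.Line}
    (h : Γ.incGraph.Adj (.inr L) v) : ∃ x ∈ Γ.pts L, v = .inl x := by
  rcases v with x | M
  · exact ⟨x, h, rfl⟩
  · exact h.elim

namespace IsGenHexagon

variable (hΓ : Γ.IsGenHexagon)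
include hΓ

theorem even_dist_iff (u v : Γ.Point ⊕ Γ.Line) :
    Even (Γ.incGraph.dist u v) ↔ (u.isLeft ↔ v.isLeft) := by
  obtain ⟨p, hp⟩ := hΓ.isGenPolygon.connected.exists_walk_length_eq_dist u v
  rw [← hp]
  exact (typeColoring Γ).even_length_iff_congr p

theorem even_dist_inl_inl (x y : Γ.Point) : Even (Γ.incGraph.dist (.inl x) (.inl y)) :=
  (hΓ.even_dist_iff _ _).2 Iff.rfl

theorem exists_inl_of_even_dist {x : Γ.Point} {v : Γ.Point ⊕ Γ.Line}
    (h : Even (Γ.incGraph.dist v (.inl x))) : ∃ y, v = .inl y :=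
  Sum.isLeft_iff.1 (((hΓ.even_dist_iff _ _).1 h).2 rfl)

theorem exists_inr_of_odd_dist {x : Γ.Point} {v : Γ.Point ⊕ Γ.Line}
    (h : Odd (Γ.incGraph.dist v (.inl x))) : ∃ L, v = .inr L := by
  rcases v with y | L
  · exact absurd (hΓ.even_dist_inl_inl y x) (Nat.not_even_iff_odd.2 h)
  · exact ⟨L, rfl⟩

theorem dist_inl_inl_ne_zero_iff {x y : Γ.Point} :
    Γ.incGraph.dist (.inl x) (.inl y) ≠ 0 ↔ x ≠ y := by
  rw [Ne, (hΓ.isGenPolygon.connected _ _).dist_eq_zero_iff, Sum.inl.injEq]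

theorem collinear_iff {x y : Γ.Point} :
    Γ.Collinear x y ↔ Γ.incGraph.dist (.inl x) (.inl y) = 2 := by
  constructor
  · rintro ⟨hne, L, hx, hy⟩
    have hle := hΓ.isGenPolygon.dist_triangle (.inl x) (.inr L) (.inl y)
    rw [dist_inl_inr_eq_one_iff.2 hx, dist_inr_inl_eq_one_iff.2 hy] at hle
    obtain ⟨k, hk⟩ := hΓ.even_dist_inl_inl x y
    have := hΓ.dist_inl_inl_ne_zero_iff.2 hne
    omega
  · intro h
    obtain ⟨v, hxv, hvy⟩ := hΓ.isGenPolygon.exists_dist_eq_of_le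
      (show 1 ≤ Γ.incGraph.dist (.inl x) (.inl y) by omega)
    obtain ⟨L, rfl⟩ := hΓ.exists_inr_of_odd_dist (v := v) (x := y) ⟨0, by omega⟩
    exact ⟨hΓ.dist_inl_inl_ne_zero_iff.1 (by omega), L, dist_inl_inr_eq_one_iff.1 hxv,
      dist_inr_inl_eq_one_iff.1 (by omega)⟩

theorem special_iff {x y : Γ.Point} :
    Γ.Special x y ↔ Γ.incGraph.dist (.inl x) (.inl y) = 4 := by
  simp only [Special, hΓ.collinear_iff, ← hΓ.dist_inl_inl_ne_zero_iff]
  constructor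
  · rintro ⟨h0, h2, z, hxz, hyz⟩
    rw [SimpleGraph.dist_comm] at hyz
    have hle := hΓ.isGenPolygon.dist_triangle (.inl x) (.inl z) (.inl y)
    rw [hxz, hyz] at hle
    obtain ⟨k, hk⟩ := hΓ.even_dist_inl_inl x y
    omega
  · intro h
    obtain ⟨v, hxv, hvy⟩ := hΓ.isGenPolygon.exists_dist_eq_of_le
      (show 2 ≤ Γ.incGraph.dist (.inl x) (.inl y) by omega)
    obtain ⟨z, rfl⟩ := hΓ.exists_inl_of_even_dist (v := v) (x := y) ⟨1, by omega⟩
    exact ⟨by omega, by omega, z, hxv, by rw [SimpleGraph.dist_comm]; omega⟩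

theorem opposite_iff {x y : Γ.Point} :
    Γ.Opposite x y ↔ Γ.incGraph.dist (.inl x) (.inl y) = 6 := by
  simp only [Opposite, hΓ.special_iff, hΓ.collinear_iff, ← hΓ.dist_inl_inl_ne_zero_iff]
  obtain ⟨k, hk⟩ := hΓ.even_dist_inl_inl x y
  have := hΓ.isGenPolygon.dist_le (.inl x) (.inl y)
  omega

theorem closeTo_of_dist_eq_three {x : Γ.Point} {L : Γ.Line}
    (h : Γ.incGraph.dist (.inr L) (.inl x) = 3) : Γ.CloseTo x L := by
  obtain ⟨v, hLv, hv⟩ := hΓ.isGenPolygon.exists_adj_dist_eq_add_one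
    (v := .inr L) (w := .inl x) Sum.inr_ne_inl
  obtain ⟨y, hy, rfl⟩ := exists_inl_of_adj hLv
  refine ⟨y, ⟨hy, hΓ.collinear_iff.2 (by rw [SimpleGraph.dist_comm]; omega)⟩, ?_⟩
  rintro z ⟨hz, hxz⟩
  by_contra hne
  have hzx : Γ.incGraph.dist (.inl z) (.inl x) = _ :=
    hΓ.isGenPolygon.dist_eq_add_one_of_ne hLv (SimpleGraph.dist_eq_one_iff_adj.1
      (dist_inr_inl_eq_one_iff.2 hz)) (fun h => hne (Sum.inl.inj h).symm) hv (by omega)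
  rw [hΓ.collinear_iff, SimpleGraph.dist_comm] at hxz
  omega

theorem dist_le_three_of_closeTo {x : Γ.Point} {L : Γ.Line} (h : Γ.CloseTo x L) :
    Γ.incGraph.dist (.inl x) (.inr L) ≤ 3 := by
  obtain ⟨y, ⟨hy, hxy⟩, -⟩ := h
  have := hΓ.isGenPolygon.dist_triangle (.inl x) (.inl y) (.inr L)
  rwa [hΓ.collinear_iff.1 hxy, dist_inl_inr_eq_one_iff.2 hy] at this

theorem dist_eq_six_of_oppLines {L M : Γ.Line} (h : Γ.OppLines L M) :
    Γ.incGraph.dist (.inr L) (.inr M) = 6 := by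
  have hG := hΓ.isGenPolygon
  obtain ⟨hdisj, hcol⟩ := h
  have hLM : L ≠ M := by
    rintro rfl
    obtain ⟨v, hv, -⟩ := hG.exists_adj_ne (.inr L) (.inr L)
    obtain ⟨x, hx, -⟩ := exists_inl_of_adj hv
    exact hdisj x hx hx
  obtain ⟨v, hLv, hvM⟩ := hG.exists_adj_dist_eq_add_one (fun h => hLM (Sum.inr.inj h))
  obtain ⟨x, hx, rfl⟩ := exists_inl_of_adj hLv
  obtain ⟨w, hMw, hwx⟩ := hG.exists_adj_dist_eq_add_one
    (v := .inr M) (w := .inl x) Sum.inr_ne_inl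
  obtain ⟨y, hy, rfl⟩ := exists_inl_of_adj hMw
  have h0 := hΓ.dist_inl_inl_ne_zero_iff.2 (fun h : y = x => hdisj x hx (h ▸ hy))
  have h2 := mt hΓ.collinear_iff.2 (hcol x hx y hy)
  obtain ⟨k, hk⟩ := hΓ.even_dist_inl_inl y x
  have hle := hG.dist_le (.inr L) (.inr M)
  rw [SimpleGraph.dist_comm] at h2 hwx
  omega

theorem oppLines_of_dist_eq_six {L M : Γ.Line}
    (h : Γ.incGraph.dist (.inr L) (.inr M) = 6) : Γ.OppLines L M := by
  have hG := hΓ.isGenPolygon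
  have far : ∀ x ∈ Γ.pts L, ∀ y ∈ Γ.pts M, 4 ≤ Γ.incGraph.dist (.inl x) (.inl y) := by
    intro x hx y hy
    have hLx := hG.dist_triangle (.inr L) (.inl x) (.inr M)
    have hxM := hG.dist_triangle (.inl x) (.inl y) (.inr M)
    rw [h, dist_inr_inl_eq_one_iff.2 hx] at hLx
    rw [dist_inl_inr_eq_one_iff.2 hy] at hxM
    omega
  refine ⟨fun x hx hxM => ?_, fun x hx y hy hxy => ?_⟩
  · simpa using far x hx x hxM
  · have := far x hx y hy
    rw [hΓ.collinear_iff.1 hxy] at this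
    omega

theorem trace3_eq_distTrace {L M : Γ.Line} (h : Γ.OppLines L M) :
    Γ.trace3 L M = distTrace 3 (.inr L) (.inr M) := by
  ext x
  constructor
  · rintro ⟨hL, hM⟩
    have hxL := hΓ.dist_le_three_of_closeTo hL
    have hxM := hΓ.dist_le_three_of_closeTo hM
    have htri := hΓ.isGenPolygon.dist_triangle (.inr L) (.inl x) (.inr M)
    rw [hΓ.dist_eq_six_of_oppLines h] at htri
    rw [SimpleGraph.dist_comm] at hxL
    exact ⟨by omega, by omega⟩
  · rintro ⟨hL, hM⟩
    exact ⟨hΓ.closeTo_of_dist_eq_three hL,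
      hΓ.closeTo_of_dist_eq_three (by rw [SimpleGraph.dist_comm]; omega)⟩

theorem setOf_special_collinear_eq_distTrace (p q : Γ.Point) :
    {x | Γ.Special q x ∧ Γ.Collinear x p} = distTrace 2 (.inl p) (.inl q) := by
  ext x
  simp only [distTrace, Set.mem_ofPred_eq, hΓ.special_iff, hΓ.collinear_iff]
  rw [SimpleGraph.dist_comm (u := Sum.inl q), SimpleGraph.dist_comm (v := Sum.inl p)]
  omega

theorem exists_line_dist_eq_three_of_opposite {x y : Γ.Point} (hxy : Γ.Opposite x y)
    {v : Γ.Point ⊕ Γ.Line} (hxv : Γ.incGraph.Adj (.inl x) v) :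
    ∃ L : Γ.Line, Γ.incGraph.dist v (.inr L) = 2 ∧
      Γ.incGraph.dist (.inr L) (.inl x) = 3 ∧ Γ.incGraph.dist (.inr L) (.inl y) = 3 := by
  have hG := hΓ.isGenPolygon
  rw [hΓ.opposite_iff] at hxy
  have hxv1 := SimpleGraph.dist_eq_one_iff_adj.2 hxv
  have hvy : Γ.incGraph.dist v (.inl y) = 5 := by
    have hodd : Odd (Γ.incGraph.dist v (.inl y)) := Nat.not_even_iff_odd.1 fun heven => by
      obtain ⟨z, rfl⟩ := hΓ.exists_inl_of_even_dist heven
      exact hxv.elim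
    obtain ⟨k, hk⟩ := hodd
    have hle := hG.dist_le v (.inl y)
    have htri := hG.dist_triangle (.inl x) v (.inl y)
    omega
  obtain ⟨m, hvm, hmy⟩ := hG.exists_dist_eq_of_le (show 2 ≤ Γ.incGraph.dist v (.inl y) by omega)
  obtain ⟨L, rfl⟩ := hΓ.exists_inr_of_odd_dist (v := m) (x := y) ⟨1, by omega⟩
  have hxL := hG.dist_triangle (.inl x) v (.inr L)
  have hxLy := hG.dist_triangle (.inl x) (.inr L) (.inl y)
  exact ⟨L, hvm, by rw [SimpleGraph.dist_comm]; omega, by omega⟩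

theorem exists_mem_trace3_of_opposite {x y : Γ.Point} (hxy : Γ.Opposite x y) :
    ∃ L M, Γ.OppLines L M ∧ x ∈ Γ.trace3 L M ∧ y ∈ Γ.trace3 L M := by
  have hG := hΓ.isGenPolygon
  obtain ⟨a, hxa, -⟩ := hG.exists_adj_ne (.inl x) (.inl x)
  obtain ⟨b, hxb, hba⟩ := hG.exists_adj_ne (.inl x) a
  obtain ⟨L, haL, hLx, hLy⟩ := hΓ.exists_line_dist_eq_three_of_opposite hxy hxa
  obtain ⟨M, hbM, hMx, hMy⟩ := hΓ.exists_line_dist_eq_three_of_opposite hxy hxb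
  refine ⟨L, M, hΓ.oppLines_of_dist_eq_six ?_,
    ⟨hΓ.closeTo_of_dist_eq_three hLx, hΓ.closeTo_of_dist_eq_three hMx⟩,
    ⟨hΓ.closeTo_of_dist_eq_three hLy, hΓ.closeTo_of_dist_eq_three hMy⟩⟩
  rw [SimpleGraph.dist_comm] at hLx hMx
  have haM : Γ.incGraph.dist a (.inr M) = Γ.incGraph.dist (.inl x) (.inr M) + 1 :=
    hG.dist_eq_add_one_of_ne hxb hxa hba (by omega) (by omega)
  rw [hG.dist_eq_add_of_adj hxa (by omega) haM (by omega), hLx, hMx]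

end IsGenHexagon

namespace IsGeometricLine

variable {T : Set Γ.Point} (hT : Γ.IsGeometricLine T)
include hT

theorem not_opposite_of_two {q x y t : Γ.Point} (hx : x ∈ T) (hy : y ∈ T) (hxy : x ≠ y)
    (hqx : ¬ Γ.Opposite q x) (hqy : ¬ Γ.Opposite q y) (ht : t ∈ T) : ¬ Γ.Opposite q t :=
  (hT q).elim (fun h => h t ht) fun h => absurd (h.unique ⟨hx, hqx⟩ ⟨hy, hqy⟩) hxy

theorem exists_not_opposite (hne : T.Nonempty) (q : Γ.Point) : ∃ t ∈ T, ¬ Γ.Opposite q t :=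
  (hT q).elim (fun h => hne.imp fun t ht => ⟨ht, h t ht⟩) ExistsUnique.exists

variable (hΓ : Γ.IsGenHexagon)
include hΓ

theorem dist_le_of_two {c : Γ.Point ⊕ Γ.Line} {i : ℕ} {x y t : Γ.Point} (hx : x ∈ T)
    (hy : y ∈ T) (hxy : x ≠ y) (hcx : Γ.incGraph.dist c (.inl x) ≤ i)
    (hcy : Γ.incGraph.dist c (.inl y) ≤ i) (ht : t ∈ T) : Γ.incGraph.dist c (.inl t) ≤ i := by
  by_contra! hlt
  have hG := hΓ.isGenPolygon
  have h6 := hG.dist_le c (.inl t)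
  obtain ⟨v, hcv, hvt⟩ := hG.exists_dist_eq_add
    (show (6 - Γ.incGraph.dist c (.inl t)) + Γ.incGraph.dist c (.inl t) ≤ 6 by omega)
  obtain ⟨q, rfl⟩ := hΓ.exists_inl_of_even_dist (v := v) (x := t) ⟨3, by omega⟩
  have near : ∀ z, Γ.incGraph.dist c (.inl z) ≤ i → ¬ Γ.Opposite q z := fun z hz hqz => by
    have := hG.dist_triangle (.inl q) c (.inl z)
    rw [hΓ.opposite_iff.1 hqz, SimpleGraph.dist_comm, hcv] at this
    omega
  exact hT.not_opposite_of_two hx hy hxy (near x hcx) (near y hcy) ht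
    (hΓ.opposite_iff.2 (by omega))

theorem exists_dist_add_one_eq_of_adj (hne : T.Nonempty) {c a : Γ.Point ⊕ Γ.Line} {i : ℕ}
    (hi : i < 6) (hc : ∀ t ∈ T, Γ.incGraph.dist c (.inl t) = i) (hca : Γ.incGraph.Adj c a) :
    ∃ t ∈ T, Γ.incGraph.dist a (.inl t) + 1 = i := by
  have hG := hΓ.isGenPolygon
  by_contra! hcon
  have hfar : ∀ t ∈ T, Γ.incGraph.dist a (.inl t) = Γ.incGraph.dist c (.inl t) + 1 :=
    fun t ht => (hG.dist_adj_eq hca (by rw [hc t ht]; exact hi)).resolve_left fun h =>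
      hcon t ht (by rw [← h, hc t ht])
  have hac := SimpleGraph.dist_eq_one_iff_adj.2 hca.symm
  obtain ⟨u, hau, huc⟩ := hG.exists_dist_eq_add (k := 5 - i) (v := a) (w := c) (by omega)
  have hopp : ∀ t ∈ T, Γ.incGraph.dist u (.inl t) = 6 := fun t ht => by
    have hct := hc t ht
    rw [SimpleGraph.dist_comm] at huc
    rw [hG.dist_eq_add_of_adj hca (by omega) (hfar t ht) (by omega)]
    omega
  obtain ⟨t₀, ht₀⟩ := hne
  obtain ⟨q, rfl⟩ := hΓ.exists_inl_of_even_dist (v := u) (x := t₀) ⟨3, hopp t₀ ht₀⟩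
  obtain ⟨t, ht, hqt⟩ := hT.exists_not_opposite ⟨t₀, ht₀⟩ q
  exact hqt (hΓ.opposite_iff.2 (hopp t ht))

theorem eq_pts_of_collinear {x y : Γ.Point} (hx : x ∈ T) (hy : y ∈ T)
    (hxy : Γ.Collinear x y) : ∃ L, T = Γ.pts L := by
  have hG := hΓ.isGenPolygon
  obtain ⟨hne, L, hxL, hyL⟩ := hxy
  have hTL : ∀ t ∈ T, Γ.incGraph.dist (.inr L) (.inl t) = 1 := fun t ht =>
    (hT.dist_le_of_two hΓ hx hy hne (dist_inr_inl_eq_one_iff.2 hxL).le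
      (dist_inr_inl_eq_one_iff.2 hyL).le ht).antisymm
      (hG.connected.pos_dist_of_ne Sum.inr_ne_inl)
  refine ⟨L, Set.Subset.antisymm
    (fun t ht => dist_inr_inl_eq_one_iff.1 (hTL t ht)) fun z hz => ?_⟩
  obtain ⟨t, ht, hzt⟩ := hT.exists_dist_add_one_eq_of_adj hΓ ⟨x, hx⟩ (by omega) hTL
    (a := .inl z) hz
  have hzt : z = t := by
    by_contra h
    exact hΓ.dist_inl_inl_ne_zero_iff.2 h (by omega)
  exact hzt ▸ ht

theorem eq_distTrace {c w : Γ.Point ⊕ Γ.Line} {i : ℕ} (hcw : Γ.incGraph.dist c w = 6)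
    (hi : 0 < i) (hi6 : i < 6) (hnt : (T ∩ distTrace i c w).Nontrivial) :
    T = distTrace i c w := by
  have hG := hΓ.isGenPolygon
  obtain ⟨x, ⟨hx, hcx, hxw⟩, y, ⟨hy, hcy, hyw⟩, hxy⟩ := hnt
  rw [SimpleGraph.dist_comm] at hxw hyw
  have hsub : ∀ t ∈ T, t ∈ distTrace i c w := fun t ht => by
    have hct := hT.dist_le_of_two hΓ hx hy hxy hcx.le hcy.le ht
    have hwt := hT.dist_le_of_two hΓ hx hy hxy (c := w) (i := 6 - i) (by omega) (by omega) ht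
    have htri := hG.dist_triangle c (.inl t) w
    rw [SimpleGraph.dist_comm] at hwt
    exact ⟨by omega, by omega⟩
  refine Set.Subset.antisymm hsub fun z ⟨hcz, hzw⟩ => ?_
  obtain ⟨a, hca, haz⟩ := hG.exists_adj_dist_eq_add_one (v := c) (w := .inl z) (by
    rintro rfl; rw [SimpleGraph.dist_self] at hcz; omega)
  obtain ⟨t, ht, hat⟩ := hT.exists_dist_add_one_eq_of_adj hΓ ⟨x, hx⟩ hi6
    (fun t ht => (hsub t ht).1) hca
  have htw := (hsub t ht).2
  have hac := SimpleGraph.dist_eq_one_iff_adj.2 hca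
  have haw : Γ.incGraph.dist a w = 5 := by
    have := hG.dist_triangle c a w
    have := hG.dist_triangle a (.inl z) w
    omega
  have hzt : Sum.inl z = Sum.inl t :=
    hG.eq_of_dist_add_dist_eq (v := a) (w := w) (by omega) (by omega) (by omega) (by omega)
  exact Sum.inl.inj hzt ▸ ht

theorem isHyperbolicLine_of_special (hcol : ∀ x ∈ T, ∀ y ∈ T, ¬ Γ.Collinear x y)
    {x y : Γ.Point} (hx : x ∈ T) (hy : y ∈ T) (hxy : Γ.Special x y) :
    Γ.IsHyperbolicLine T := by
  obtain ⟨hne, -, p, hxp, hyp⟩ := hxy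
  have hTp : ∀ t ∈ T, Γ.Collinear t p := fun t ht => by
    have hle := hT.dist_le_of_two hΓ hx hy hne (c := .inl p) (i := 2)
      (by rw [SimpleGraph.dist_comm, hΓ.collinear_iff.1 hxp])
      (by rw [SimpleGraph.dist_comm, hΓ.collinear_iff.1 hyp]) ht
    have hpt := hΓ.dist_inl_inl_ne_zero_iff.2 (fun h : p = t => hcol x hx t ht (h ▸ hxp))
    obtain ⟨k, hk⟩ := hΓ.even_dist_inl_inl p t
    rw [hΓ.collinear_iff, SimpleGraph.dist_comm]
    omega
  refine ⟨fun s hs t ht hst => ⟨hst, hcol s hs t ht, p, hTp s hs, hTp t ht⟩, p, hTp, ?_⟩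
  intro q hq hnt
  rw [hΓ.setOf_special_collinear_eq_distTrace]
  refine (hT.eq_distTrace hΓ (by rw [SimpleGraph.dist_comm, hΓ.opposite_iff.1 hq])
    (by omega) (by omega) (hnt.mono ?_)).symm
  rw [← hΓ.setOf_special_collinear_eq_distTrace]
  exact fun t ⟨ht, hqt⟩ => ⟨ht, hqt, hTp t ht⟩

theorem eq_trace3 {L M : Γ.Line} (hLM : Γ.OppLines L M)
    (hnt : (T ∩ Γ.trace3 L M).Nontrivial) : T = Γ.trace3 L M := by
  rw [hΓ.trace3_eq_distTrace hLM] at hnt ⊢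
  exact hT.eq_distTrace hΓ (hΓ.dist_eq_six_of_oppLines hLM) (by omega) (by omega) hnt

end IsGeometricLine

end GenHexagon

theorem geometricLine_classification_general (Γ : GenHexagon) (hΓ : Γ.IsGenHexagon)
    (T : Set Γ.Point) (hT : Γ.IsGeometricLine T) (hnt : T.Nontrivial) :
    (∃ L, T = Γ.pts L) ∨
    Γ.IsHyperbolicLine T ∨
    (∃ L M, Γ.OppLines L M ∧ T = Γ.trace3 L M ∧ Γ.RegularTrace3 L M) := by
  by_cases hcol : ∃ x ∈ T, ∃ y ∈ T, Γ.Collinear x y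
  · obtain ⟨x, hx, y, hy, hxy⟩ := hcol
    exact Or.inl (hT.eq_pts_of_collinear hΓ hx hy hxy)
  push Not at hcol
  obtain ⟨x, hx, y, hy, hne⟩ := hnt
  by_cases hspec : Γ.Special x y
  · exact Or.inr (Or.inl (hT.isHyperbolicLine_of_special hΓ hcol hx hy hspec))
  have hopp : Γ.Opposite x y := ⟨hne, hcol x hx y hy, hspec⟩
  obtain ⟨L, M, hLM, hxLM, hyLM⟩ := hΓ.exists_mem_trace3_of_opposite hopp
  have hTLM : T = Γ.trace3 L M := hT.eq_trace3 hΓ hLM ⟨x, ⟨hx, hxLM⟩, y, ⟨hy, hyLM⟩, hne⟩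
  refine Or.inr (Or.inr ⟨L, M, hLM, hTLM, fun N hNM hcap => ?_⟩)
  rw [← hTLM, Set.inter_comm] at hcap
  rw [← hTLM, ← hT.eq_trace3 hΓ hNM hcap]

/-- A geometric line of a thick generalised hexagon containing at least two points is
a line, a hyperbolic line, or a regular distance-3 trace. -/
theorem geometricLine_classification (Γ : GenHexagon) (hΓ : Γ.IsGenHexagon)
    (hth : Γ.Thick) (T : Set Γ.Point) (hT : Γ.IsGeometricLine T) (hnt : T.Nontrivial) :
    (∃ L, T = Γ.pts L) ∨
    Γ.IsHyperbolicLine T ∨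
    (∃ L M, Γ.OppLines L M ∧ T = Γ.trace3 L M ∧ Γ.RegularTrace3 L M) :=
  geometricLine_classification_general Γ hΓ T hT hnt
end
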